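/- There exists a nontrivial symmetric (45, 12, 3) design 𝒟 on a 45-element point set 𝒫 together with a group G of automorphisms of 𝒟 of order 3240 such that G is flag-transitive and point-imprimitive: G acts transitively on the flags of 𝒟 and leaves invariant a nontrivial partition of 𝒫 into 5 classes of size 9. -/

import Mathlib

/-- A symmetric `(v, k, λ)` design: a finite set of `v` points together with a family of
`v` blocks, each block a `k`-element subset of the points, such that every point lies in
exactly `k` blocks and any two distinct points lie in exactly `λ` common blocks. -/
structure SymmetricDesign (P : Type) [Fintype P] [DecidableEq P] (v k lam : ℕ) where
  blocks : Finset (Finset P)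
  card_points : Fintype.card P = v
  card_blocks : blocks.card = v
  block_size : ∀ b ∈ blocks, b.card = k
  point_count : ∀ p : P, (blocks.filter fun b => p ∈ b).card = k
  pair_count : ∀ p q : P, p ≠ q →
    (blocks.filter fun b => p ∈ b ∧ q ∈ b).card = lam

/-- `G` is a group of automorphisms of the design `D`: every element of `G` maps blocks
to blocks. -/
def IsAutGroup {P : Type} [Fintype P] [DecidableEq P] {v k lam : ℕ}
    (D : SymmetricDesign P v k lam) (G : Subgroup (Equiv.Perm P)) : Prop :=
  ∀ g ∈ G, ∀ b ∈ D.blocks, b.image (g : P → P) ∈ D.blocks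

/-- `G` is flag-transitive on `D`: it acts transitively on incident point-block pairs. -/
def FlagTransitive {P : Type} [Fintype P] [DecidableEq P] {v k lam : ℕ}
    (D : SymmetricDesign P v k lam) (G : Subgroup (Equiv.Perm P)) : Prop :=
  ∀ p₁ p₂ : P, ∀ b₁ b₂ : Finset P, b₁ ∈ D.blocks → b₂ ∈ D.blocks →
    p₁ ∈ b₁ → p₂ ∈ b₂ → ∃ g ∈ G, g p₁ = p₂ ∧ b₁.image (g : P → P) = b₂

/-!
Consider ten lines of projective 3-space, in two sets of five pairwise skew lines, such that each
line of one set meets all lines of the other set except its partner. They are subgroups `L i` and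
`M j` of a vector space `V` of dimension 4 over the field of order `q = 3`, with `q + 2 = 5` lines
in each set. Take the cosets of the `L i` as points, the cosets of the `M j` as blocks,
and let a point and a block be incident when their indices differ and they intersect. Modulo `M j`
the `L i` with `i ≠ j` are complementary to one another, and dually the `M j` with `j ≠ i` cover
`V` modulo `L i`; so any two points have `q` common blocks, whether their indices differ or agree.
The points fall into `q + 2` parallel classes, and an incident pair amounts to a vector and two
distinct indices. Hence a linear group that permutes the pairs of partners 2-transitively, extended
by the translations, is flag-transitive.

The ten lines and a linear group of order 40 come from the field of order 81: multiplication by a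
root of unity of order 5 permutes each set cyclically, and a semilinear map fixes one line of each.
-/

section SubgroupCounting

variable {W : Type*} [AddCommGroup W]

theorem card_inf_mul_relIndex (A B : AddSubgroup W) :
    Nat.card ↥(A ⊓ B) * B.relIndex A = Nat.card A := by
  rw [← AddSubgroup.inf_relIndex_left, ← AddSubgroup.relIndex_bot_left (A ⊓ B),
    AddSubgroup.relIndex_mul_relIndex _ _ _ bot_le inf_le_left, AddSubgroup.relIndex_bot_left]

theorem card_inf_mul_card_map_mk' (A B : AddSubgroup W) :
    Nat.card ↥(A ⊓ B) * Nat.card (A.map (QuotientAddGroup.mk' B)) = Nat.card A := by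
  rw [← AddSubgroup.relIndex_ker, QuotientAddGroup.ker_mk', card_inf_mul_relIndex]

theorem card_sup_mul_card_inf (A B : AddSubgroup W) :
    Nat.card ↥(A ⊔ B) * Nat.card ↥(A ⊓ B) = Nat.card A * Nat.card B := by
  have hsup : Nat.card B * B.relIndex A = Nat.card ↥(A ⊔ B) := by
    rw [← AddSubgroup.relIndex_sup_right, ← AddSubgroup.relIndex_bot_left,
      AddSubgroup.relIndex_mul_relIndex _ _ _ bot_le le_sup_right, AddSubgroup.relIndex_bot_left]
  rw [← hsup, mul_assoc, mul_comm (B.relIndex A), card_inf_mul_relIndex, mul_comm]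

theorem disjoint_iff_sup_eq_top_of_card_mul_card [Finite W] {A B : AddSubgroup W}
    (hcard : Nat.card A * Nat.card B = Nat.card W) : Disjoint A B ↔ A ⊔ B = ⊤ := by
  have hmul := card_sup_mul_card_inf A B
  rw [disjoint_iff, ← AddSubgroup.card_eq_one, ← AddSubgroup.card_eq_iff_eq_top]
  constructor <;> intro h
  · rw [← hcard, ← hmul, h, mul_one]
  · refine Nat.eq_of_mul_eq_mul_left (Nat.card_pos (α := W)) ?_
    rw [mul_one, ← h, hmul, hcard, h]

theorem mk'_mem_map_mk'_iff {A B : AddSubgroup W} {w : W} :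
    QuotientAddGroup.mk' B w ∈ A.map (QuotientAddGroup.mk' B) ↔ w ∈ A ⊔ B := by
  rw [← AddSubgroup.mem_comap, AddSubgroup.comap_map_eq, QuotientAddGroup.ker_mk']

theorem ncard_setOf_sub_mem (A : AddSubgroup W) (a : W) : {c | c - a ∈ A}.ncard = Nat.card A :=
  Nat.card_congr ((Equiv.subRight a).subtypeEquiv fun _ => Iff.rfl)

theorem ncard_setOf_sub_mem_and_sub_mem_of_isCompl {A B : AddSubgroup W} (h : IsCompl A B)
    (a b : W) : {c | c - a ∈ A ∧ c - b ∈ B}.ncard = 1 := by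
  obtain ⟨x, hx, y, hy, hxy⟩ := AddSubgroup.mem_sup.1 (h.sup_eq_top ▸ AddSubgroup.mem_top (b - a))
  have hb : b = a + x + y := by rw [add_assoc, hxy, add_sub_cancel]
  refine Set.ncard_eq_one.2
    ⟨a + x, Set.eq_singleton_iff_unique_mem.2 ⟨⟨by simpa using hx, by simpa [hb] using hy⟩, ?_⟩⟩
  rintro c ⟨hca, hcb⟩
  refine sub_eq_zero.1 (AddSubgroup.disjoint_def.1 h.disjoint ?_ ?_)
  · simpa [sub_sub] using A.sub_mem hca hx
  · simpa [hb, sub_add_eq_sub_sub] using B.add_mem hcb hy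

theorem card_subtype_ne {X : Type*} [Finite X] (a : X) :
    Nat.card {x // x ≠ a} = Nat.card X - 1 :=
  (Set.ncard_compl {a}).trans (by rw [Set.ncard_singleton])

/-- Counting: the `(q + 1)(q - 1)` nonzero elements of the `B j` are all those of `W`. -/
theorem exists_mem_of_pairwise_disjoint [Finite W] {κ : Type*} {B : κ → AddSubgroup W}
    {q : ℕ} (hW : Nat.card W = q ^ 2) (hκ : Nat.card κ = q + 1) (hB : ∀ j, Nat.card (B j) = q)
    (hdisj : Pairwise (Function.onFun Disjoint B)) (w : W) : ∃ j, w ∈ B j := by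
  have : Finite κ := Nat.finite_of_card_ne_zero (by omega)
  have : Nonempty κ := Finite.card_pos_iff.1 (by omega)
  obtain rfl | hw := eq_or_ne w 0
  · exact ⟨Classical.arbitrary κ, zero_mem _⟩
  let f : (Σ j, {x : B j // x ≠ 0}) → {x : W // x ≠ 0} :=
    fun x => ⟨x.2, by simpa using x.2.2⟩
  have hf : Function.Injective f := by
    rintro ⟨j, ⟨x, hx⟩, hx0⟩ ⟨k, ⟨y, hy⟩, hy0⟩ hxy
    obtain rfl : x = y := congrArg Subtype.val hxy
    obtain rfl : j = k := by
      by_contra hjk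
      exact hx0 (Subtype.ext (AddSubgroup.disjoint_def.1 (hdisj hjk) hx hy))
    rfl
  have hle : Nat.card {x : W // x ≠ 0} ≤ Nat.card (Σ j, {x : B j // x ≠ 0}) := by
    have := Fintype.ofFinite κ
    rw [Nat.card_sigma]
    simp only [card_subtype_ne, hB, hW, Finset.sum_const, Finset.card_univ,
      ← Nat.card_eq_fintype_card, hκ, smul_eq_mul]
    exact (Nat.sq_sub_sq q 1).le
  obtain ⟨⟨j, x, hx0⟩, hxw⟩ := (hf.bijective_of_nat_card_le hle).surjective ⟨w, hw⟩
  obtain rfl : (x : W) = w := congrArg Subtype.val hxw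
  exact ⟨j, x.2⟩

end SubgroupCounting

section ZModPowers

variable {R : Type*} [Monoid R] {n : ℕ} [NeZero n]

/-- The homomorphism from the cyclic group of order `n` that sends the generator to a given `x` with
`x ^ n = 1`. -/
def zmodPowersHom (x : R) (hx : x ^ n = 1) : Multiplicative (ZMod n) →* R where
  toFun k := x ^ k.toAdd.val
  map_one' := by simp
  map_mul' a b := by rw [toAdd_mul, ZMod.val_add, ← pow_add, ← pow_eq_pow_mod _ hx]

theorem pow_mul_zmodPowersHom {x y : R} {m : ℕ} (hx : x ^ n = 1) (hxy : y * x = x ^ m * y) (k : ℕ)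
    (t : ZMod n) : y ^ k * zmodPowersHom x hx (.ofAdd t) =
      zmodPowersHom x hx (.ofAdd ((m : ZMod n) ^ k * t)) * y ^ k := by
  have hgen (t : ZMod n) :
      y * zmodPowersHom x hx (.ofAdd t) = zmodPowersHom x hx (.ofAdd (m * t)) * y := by
    have hval : x ^ ((m : ZMod n) * t).val = (x ^ m) ^ t.val := by
      rw [← pow_mul, ← ZMod.natCast_zmod_val t, ← Nat.cast_mul, ZMod.val_natCast,
        ← pow_eq_pow_mod _ hx, ZMod.natCast_zmod_val]
    exact (SemiconjBy.pow_right hxy t.val).eq.trans (congrArg (· * y) hval.symm)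
  induction k generalizing t with
  | zero => simp
  | succ k ih => rw [pow_succ, mul_assoc, hgen, ← mul_assoc, ih, mul_assoc, ← mul_assoc (_ ^ k),
      pow_succ]

end ZModPowers

section Labelling

variable {Γ P X : Type*}

theorem ncard_setOf_apply_equiv (e : P ≃ X) (Q : X → Prop) :
    {x | Q (e x)}.ncard = {p | Q p}.ncard :=
  Nat.card_congr (e.subtypeEquiv fun _ => Iff.rfl)

variable [Group Γ] [MulAction Γ P] [MulAction Γ X]

theorem natCard_range_toPermHom [FaithfulSMul Γ P] :
    Nat.card (MulAction.toPermHom Γ P).range = Nat.card Γ :=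
  (Nat.card_congr (MonoidHom.ofInjective (f := MulAction.toPermHom Γ P)
    MulAction.toPerm_injective).toEquiv).symm

theorem exists_mem_range_toPermHom_apply_eq [MulAction.IsPretransitive Γ P] (x y : P) :
    ∃ g ∈ (MulAction.toPermHom Γ P).range, g x = y := by
  obtain ⟨g, hg⟩ := MulAction.exists_smul_eq Γ x y
  exact ⟨_, ⟨g, rfl⟩, hg⟩

theorem faithfulSMul_of_equiv [FaithfulSMul Γ X] (e : P ≃ X)
    (he : ∀ (g : Γ) x, e (g • x) = g • e x) : FaithfulSMul Γ P where
  eq_of_smul_eq_smul {g g'} h := eq_of_smul_eq_smul (α := X) fun p => by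
    simpa [he] using congrArg e (h (e.symm p))

theorem isPretransitive_of_equiv [MulAction.IsPretransitive Γ X] (e : P ≃ X)
    (he : ∀ (g : Γ) x, e (g • x) = g • e x) : MulAction.IsPretransitive Γ P where
  exists_smul_eq x y := by
    obtain ⟨g, hg⟩ := MulAction.exists_smul_eq Γ (e x) (e y)
    exact ⟨g, e.injective ((he g x).trans hg)⟩

end Labelling

section AffineGroup

variable (H V : Type*) [Group H] [AddCommGroup V] [DistribMulAction H V]

/-- The group of affine maps `x ↦ v + h • x` of `V`, abstractly: the elements `v` and `h` are part
of the data, even when `H` does not act faithfully. -/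
abbrev AffineGroup : Type _ :=
  Multiplicative V ⋊[(MulAutMultiplicative V).symm.toMonoidHom.comp
    (DistribMulAction.toAddAut H V)] H

variable {H V}

instance AffineGroup.instMulAction : MulAction (AffineGroup H V) V where
  smul g x := g.left.toAdd + g.right • x
  one_smul x := by
    change (0 : V) + (1 : H) • x = x
    simp
  mul_smul g h x := by
    change (g.left.toAdd + g.right • h.left.toAdd) + (g.right * h.right) • x =
      g.left.toAdd + g.right • (h.left.toAdd + h.right • x)
    rw [mul_smul, smul_add, add_assoc]

theorem AffineGroup.smul_def (g : AffineGroup H V) (x : V) :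
    g • x = g.left.toAdd + g.right • x :=
  rfl

theorem AffineGroup.smul_sub_smul (g : AffineGroup H V) (x y : V) :
    g • x - g • y = g.right • (x - y) := by
  rw [AffineGroup.smul_def, AffineGroup.smul_def, add_sub_add_left_eq_sub, smul_sub]

theorem AffineGroup.exists_right_eq_and_smul_eq (h : H) (v w : V) :
    ∃ g : AffineGroup H V, g.right = h ∧ g • v = w :=
  ⟨⟨Multiplicative.ofAdd (w - h • v), h⟩, rfl, sub_add_cancel w (h • v)⟩

theorem AffineGroup.isMultiplyPretransitive_two
    (hH : ∀ v w : V, v ≠ 0 → w ≠ 0 → ∃ h : H, h • v = w) :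
    MulAction.IsMultiplyPretransitive (AffineGroup H V) V 2 := by
  refine MulAction.is_two_pretransitive_iff.2 fun {v v' w w'} hv hw => ?_
  obtain ⟨h, hh⟩ := hH (v' - v) (w' - w) (sub_ne_zero.2 hv.symm) (sub_ne_zero.2 hw.symm)
  obtain ⟨g, rfl, rfl⟩ := AffineGroup.exists_right_eq_and_smul_eq h v w
  rw [← AffineGroup.smul_sub_smul, sub_left_inj] at hh
  exact ⟨g, rfl, hh⟩

instance [FaithfulSMul H V] : FaithfulSMul (AffineGroup H V) V where
  eq_of_smul_eq_smul {g g'} hg := by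
    have hleft : g.left = g'.left := by simpa [AffineGroup.smul_def] using hg 0
    refine SemidirectProduct.ext hleft (eq_of_smul_eq_smul fun v : V => ?_)
    simpa [AffineGroup.smul_def, hleft] using hg v

end AffineGroup

section FiberPartition

variable {P ι : Type*} [Fintype P] [DecidableEq P] [Fintype ι] [DecidableEq ι] (f : P → ι)

/-- The partition of `P` into the fibers of `f`, as a family of finsets. -/
def fiberPartition : Finset (Finset P) :=
  Finset.univ.image fun i => Finset.univ.filter (f · = i)

variable {f}

theorem mem_fiberPartition {s : Finset P} :
    s ∈ fiberPartition f ↔ ∃ i, Finset.univ.filter (f · = i) = s := by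
  simp [fiberPartition]

theorem card_fiberPartition (hf : Function.Surjective f) :
    (fiberPartition f).card = Fintype.card ι := by
  refine Finset.card_image_of_injective _ fun i j hij => ?_
  obtain ⟨p, rfl⟩ := hf i
  simpa using Finset.ext_iff.1 hij p

theorem existsUnique_mem_fiberPartition (p : P) : ∃! s, s ∈ fiberPartition f ∧ p ∈ s := by
  refine ⟨Finset.univ.filter (f · = f p), ⟨mem_fiberPartition.2 ⟨_, rfl⟩, by simp⟩, ?_⟩
  rintro s ⟨hs, hp⟩
  obtain ⟨i, rfl⟩ := mem_fiberPartition.1 hs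
  rw [(Finset.mem_filter.1 hp).2]

theorem image_mem_fiberPartition {σ : Equiv.Perm P} {τ : Equiv.Perm ι}
    (hf : ∀ p, f (σ p) = τ (f p)) {s : Finset P} (hs : s ∈ fiberPartition f) :
    s.image σ ∈ fiberPartition f := by
  obtain ⟨i, rfl⟩ := mem_fiberPartition.1 hs
  refine mem_fiberPartition.2 ⟨τ i, ?_⟩
  ext p
  obtain ⟨p, rfl⟩ := σ.surjective p
  simp [hf]

end FiberPartition

namespace SymmetricDesign

section Incidence

variable {P : Type} [Fintype P] {B : Type*}

/-- The block attached to `b` by an incidence relation `R`: the points incident with `b`. -/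
noncomputable def blockOf (R : P → B → Prop) (b : B) : Finset P :=
  (Set.toFinite {p | R p b}).toFinset

variable {R : P → B → Prop} {v k lam : ℕ}

theorem mem_blockOf {b : B} {p : P} : p ∈ blockOf R b ↔ R p b := by
  simp [blockOf]

theorem card_blockOf (b : B) : (blockOf R b).card = {p | R p b}.ncard :=
  (Set.ncard_eq_toFinset_card _ _).symm

theorem card_filter_range_blockOf [Finite B] (hR : Function.Injective (blockOf R))
    (Q : Finset P → Prop) [DecidablePred Q] :
    ((Set.finite_range (blockOf R)).toFinset.filter Q).card = {b | Q (blockOf R b)}.ncard := by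
  rw [← Set.ncard_image_of_injective _ hR, ← Set.ncard_coe_finset]
  congr 1
  ext s
  simp only [Finset.coe_filter, Set.Finite.mem_toFinset, Set.mem_range, Set.mem_ofPred_eq,
    Set.mem_image]
  constructor
  · rintro ⟨⟨b, rfl⟩, hb⟩
    exact ⟨b, hb, rfl⟩
  · rintro ⟨b, hb, rfl⟩
    exact ⟨⟨b, rfl⟩, hb⟩

variable [DecidableEq P]

/-- The symmetric design whose blocks are the sets of points incident with the elements of `B`,
for an incidence relation `R` with the right parameters. -/
noncomputable def ofIncidence [Finite B] (R : P → B → Prop) (hR : Function.Injective (blockOf R))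
    (hP : Nat.card P = v) (hB : Nat.card B = v) (hblock : ∀ b, {p | R p b}.ncard = k)
    (hpoint : ∀ p, {b | R p b}.ncard = k)
    (hpair : ∀ p q, p ≠ q → {b | R p b ∧ R q b}.ncard = lam) : SymmetricDesign P v k lam where
  blocks := (Set.finite_range (blockOf R)).toFinset
  card_points := by rw [← hP, Nat.card_eq_fintype_card]
  card_blocks := by
    simpa [hB] using card_filter_range_blockOf hR fun _ => True
  block_size := by
    simp [card_blockOf, hblock]
  point_count p := by
    simp only [card_filter_range_blockOf hR, mem_blockOf, hpoint]
  pair_count p q hpq := by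
    simp only [card_filter_range_blockOf hR, mem_blockOf, hpair p q hpq]

variable {Γ : Type*} [Group Γ] [MulAction Γ P] [MulAction Γ B]

theorem image_blockOf (hΓ : ∀ (g : Γ) p b, R (g • p) (g • b) ↔ R p b) (g : Γ) (b : B) :
    (blockOf R b).image (MulAction.toPermHom Γ P g) = blockOf R (g • b) := by
  ext p
  obtain ⟨p, rfl⟩ := MulAction.surjective g p
  simp [mem_blockOf, hΓ]

variable [Finite B] {hR : Function.Injective (blockOf R)} {hP : Nat.card P = v}
  {hB : Nat.card B = v} {hblock : ∀ b, {p | R p b}.ncard = k} {hpoint : ∀ p, {b | R p b}.ncard = k}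
  {hpair : ∀ p q, p ≠ q → {b | R p b ∧ R q b}.ncard = lam}

theorem mem_blocks_ofIncidence {s : Finset P} :
    s ∈ (ofIncidence R hR hP hB hblock hpoint hpair).blocks ↔ ∃ b, blockOf R b = s := by
  simp [ofIncidence]

theorem isAutGroup_ofIncidence (hΓ : ∀ (g : Γ) p b, R (g • p) (g • b) ↔ R p b) :
    IsAutGroup (ofIncidence R hR hP hB hblock hpoint hpair) (MulAction.toPermHom Γ P).range := by
  rintro _ ⟨g, rfl⟩ _ hs
  obtain ⟨b, rfl⟩ := mem_blocks_ofIncidence.1 hs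
  exact mem_blocks_ofIncidence.2 ⟨g • b, (image_blockOf hΓ g b).symm⟩

theorem flagTransitive_ofIncidence (hΓ : ∀ (g : Γ) p b, R (g • p) (g • b) ↔ R p b)
    (htrans : ∀ p q b c, R p b → R q c → ∃ g : Γ, g • p = q ∧ g • b = c) :
    FlagTransitive (ofIncidence R hR hP hB hblock hpoint hpair)
      (MulAction.toPermHom Γ P).range := by
  intro p q _ _ hs ht hps hqt
  obtain ⟨b, rfl⟩ := mem_blocks_ofIncidence.1 hs
  obtain ⟨c, rfl⟩ := mem_blocks_ofIncidence.1 ht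
  obtain ⟨g, hgp, hgb⟩ := htrans p q b c (mem_blockOf.1 hps) (mem_blockOf.1 hqt)
  exact ⟨_, ⟨g, rfl⟩, hgp, by rw [image_blockOf hΓ, hgb]⟩

end Incidence

end SymmetricDesign

section EquivariantFamily

variable {V ι : Type*} [AddCommGroup V]

/-- `H` permutes the members of the family `L` of subgroups according to its action on the index
set. -/
class IsEquivariantFamily (H : Type*) [Group H] [DistribMulAction H V] [MulAction H ι]
    (L : ι → AddSubgroup V) : Prop where
  smul_mem (h : H) {i : ι} {v : V} : v ∈ L i → h • v ∈ L (h • i)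

namespace IsEquivariantFamily

variable {L M : ι → AddSubgroup V} {H : Type*} [Group H] [DistribMulAction H V] [MulAction H ι]
  [IsEquivariantFamily H L]

theorem smul_mem_iff (h : H) {i : ι} {v : V} : h • v ∈ L (h • i) ↔ v ∈ L i :=
  ⟨fun hv => by simpa using smul_mem (L := L) h⁻¹ hv, smul_mem h⟩

theorem card_smul (h : H) (i : ι) : Nat.card (L (h • i)) = Nat.card (L i) :=
  (Nat.card_congr ((MulAction.toPerm h).subtypeEquiv fun _ => (smul_mem_iff h).symm)).symm

theorem disjoint_smul (h : H) {i j : ι} (hij : Disjoint (L i) (L j)) :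
    Disjoint (L (h • i)) (L (h • j)) := by
  rw [AddSubgroup.disjoint_def] at hij ⊢
  intro v hi hj
  obtain ⟨v, rfl⟩ := MulAction.surjective h v
  have hv : v = 0 := hij ((smul_mem_iff h).1 hi) ((smul_mem_iff h).1 hj)
  exact (congrArg (h • ·) hv).trans (smul_zero h)

theorem card_inf_smul [IsEquivariantFamily H M] (h : H) (i j : ι) :
    Nat.card ↥(L (h • i) ⊓ M (h • j)) = Nat.card ↥(L i ⊓ M j) :=
  (Nat.card_congr ((MulAction.toPerm h).subtypeEquiv fun _ =>
    (and_congr (smul_mem_iff h) (smul_mem_iff h)).symm)).symm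

end IsEquivariantFamily

end EquivariantFamily

section OrbitFamily

variable {K T V : Type*} [Group K] [AddCommGroup T] [DistribMulAction K T] [AddCommGroup V]
  [DistribMulAction (AffineGroup K T) V]

/-- The images of a subgroup `E` of `V` under the translations by the elements of `T`, in a
representation of the affine group of `T` on `V`. The image under the translation by `i` is encoded
as the preimage under the translation by `-i`. -/
def orbitFamily (E : AddSubgroup V) (i : T) : AddSubgroup V :=
  E.comap (DistribSMul.toAddMonoidHom V
    (SemidirectProduct.inl (.ofAdd (-i)) : AffineGroup K T))

theorem isEquivariantFamily_orbitFamily {E : AddSubgroup V}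
    (hE : ∀ (k : K), ∀ v ∈ E, (SemidirectProduct.inr k : AffineGroup K T) • v ∈ E) :
    IsEquivariantFamily (AffineGroup K T) (orbitFamily (K := K) (T := T) E) where
  smul_mem h {i v} hv := by
    have hcomm : (SemidirectProduct.inl (.ofAdd (-(h • i))) : AffineGroup K T) * h =
        SemidirectProduct.inr h.right * SemidirectProduct.inl (.ofAdd (-i)) := by
      ext
      · change -(h.left.toAdd + h.right • i) + (1 : K) • h.left.toAdd = 0 + h.right • (-i)
        rw [one_smul, smul_neg]
        abel
      · exact (one_mul h.right).trans (mul_one h.right).symm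
    change (SemidirectProduct.inl (.ofAdd (-(h • i))) : AffineGroup K T) • h • v ∈ E
    rw [← mul_smul, hcomm, mul_smul]
    exact hE _ _ hv

end OrbitFamily

section FamilyCoset

variable {V ι : Type*} [AddCommGroup V]

/-- The cosets of the members of a family of subgroups; equal cosets of members with different
indices are distinguished. -/
structure FamilyCoset (L : ι → AddSubgroup V) where
  index : ι
  coset : V ⧸ L index

namespace FamilyCoset

variable {L M : ι → AddSubgroup V}

/-- The coset of `L i` through `v`. -/
def mk' (L : ι → AddSubgroup V) (i : ι) (v : V) : FamilyCoset L :=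
  ⟨i, v⟩

theorem exists_mk'_eq (p : FamilyCoset L) : ∃ i v, mk' L i v = p := by
  obtain ⟨i, ⟨v⟩⟩ := p
  exact ⟨i, v, rfl⟩

theorem mk'_eq_mk' {i j : ι} {v w : V} : mk' L i v = mk' L j w ↔ i = j ∧ v - w ∈ L i := by
  refine ⟨fun h => ?_, ?_⟩
  · obtain rfl : i = j := congrArg index h
    exact ⟨rfl, QuotientAddGroup.eq_iff_sub_mem.1 (eq_of_heq (FamilyCoset.mk.inj h).2)⟩
  · rintro ⟨rfl, h⟩
    exact congrArg (FamilyCoset.mk i) (QuotientAddGroup.eq_iff_sub_mem.2 h)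

/-- A coset of `L i` and a coset of `M j` are incident if `i ≠ j` and they have a common
element. -/
def Incident (p : FamilyCoset L) (b : FamilyCoset M) : Prop :=
  ∃ i j v, i ≠ j ∧ mk' L i v = p ∧ mk' M j v = b

theorem Incident.symm {p : FamilyCoset L} {b : FamilyCoset M} : Incident p b → Incident b p := by
  rintro ⟨i, j, v, hij, hp, hb⟩
  exact ⟨j, i, v, hij.symm, hb, hp⟩

theorem incident_comm {p : FamilyCoset L} {b : FamilyCoset M} : Incident p b ↔ Incident b p :=
  ⟨Incident.symm, Incident.symm⟩

theorem incident_mk'_iff {i j : ι} {v : V} {c : V ⧸ M j} :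
    Incident (mk' L i v) (⟨j, c⟩ : FamilyCoset M) ↔
      i ≠ j ∧ c - v ∈ (L i).map (QuotientAddGroup.mk' (M j)) := by
  obtain ⟨u, rfl⟩ := QuotientAddGroup.mk_surjective c
  constructor
  · rintro ⟨i', j', w, hij, hw, hwu⟩
    obtain ⟨rfl, hwv⟩ := mk'_eq_mk'.1 hw
    obtain ⟨rfl, hwu'⟩ := mk'_eq_mk'.1 hwu
    refine ⟨hij, w - v, hwv, ?_⟩
    simp [QuotientAddGroup.eq_iff_sub_mem.2 hwu']
  · rintro ⟨hij, x, hx, hxu⟩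
    refine ⟨i, j, v + x, hij, mk'_eq_mk'.2 ⟨rfl, by simpa using hx⟩, mk'_eq_mk'.2 ⟨rfl, ?_⟩⟩
    rw [← QuotientAddGroup.eq_iff_sub_mem]
    simpa [eq_sub_iff_add_eq'] using hxu

/-- A coset amounts to the pair of its index and itself. -/
def equivSigma (L : ι → AddSubgroup V) : FamilyCoset L ≃ Σ i, V ⧸ L i where
  toFun p := ⟨p.index, p.coset⟩
  invFun p := ⟨p.1, p.2⟩

instance [Finite ι] [Finite V] : Finite (FamilyCoset L) :=
  Finite.of_equiv _ (equivSigma L).symm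

theorem ncard_setOf_index_eq (i : ι) :
    {p : FamilyCoset L | p.index = i}.ncard = Nat.card (V ⧸ L i) := by
  have hrange : {p : FamilyCoset L | p.index = i} = Set.range (FamilyCoset.mk (L := L) i) := by
    ext p
    exact ⟨fun hp => hp ▸ ⟨p.coset, rfl⟩, by rintro ⟨c, rfl⟩; rfl⟩
  have hinj : Function.Injective (FamilyCoset.mk (L := L) i) := fun c d hcd =>
    eq_of_heq (FamilyCoset.mk.inj hcd).2
  rw [hrange, Set.ncard_range_of_injective hinj]

theorem ncard_eq_sum [Fintype ι] [Finite V] (s : Set (FamilyCoset L)) :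
    s.ncard = ∑ i, {c : V ⧸ L i | ⟨i, c⟩ ∈ s}.ncard := by
  let e : s ≃ Σ i, {c : V ⧸ L i | (⟨i, c⟩ : FamilyCoset L) ∈ s} :=
    { toFun p := ⟨p.1.index, p.1.coset, p.2⟩
      invFun p := ⟨⟨p.1, p.2.1⟩, p.2.2⟩ }
  rw [← Nat.card_coe_set_eq, Nat.card_congr e, Nat.card_sigma]
  rfl

end FamilyCoset

namespace FamilyCoset

variable {L M : ι → AddSubgroup V} {H : Type*} [Group H] [DistribMulAction H V] [MulAction H ι]
  [IsEquivariantFamily H L] [IsEquivariantFamily H M]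

instance : MulAction (AffineGroup H V) (FamilyCoset L) where
  smul g p := ⟨g.right • p.index, g.left.toAdd +
    QuotientAddGroup.map (L p.index) (L (g.right • p.index)) (DistribSMul.toAddMonoidHom V g.right)
      (fun _ hv => IsEquivariantFamily.smul_mem g.right hv) p.coset⟩
  one_smul p := by
    obtain ⟨i, v, rfl⟩ := exists_mk'_eq p
    change mk' L ((1 : H) • i) ((1 : AffineGroup H V) • v) = mk' L i v
    rw [one_smul, one_smul]
  mul_smul g h p := by
    obtain ⟨i, v, rfl⟩ := exists_mk'_eq p
    change mk' L ((g.right * h.right) • i) ((g * h) • v) = mk' L (g.right • h.right • i) (g • h • v)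
    rw [mul_smul, mul_smul]

theorem Incident.smul {p : FamilyCoset L} {b : FamilyCoset M} (h : Incident p b)
    (g : AffineGroup H V) : Incident (g • p) (g • b) := by
  obtain ⟨i, j, v, hij, rfl, rfl⟩ := h
  exact ⟨_, _, _, (MulAction.injective g.right).ne hij, rfl, rfl⟩

theorem incident_smul_smul (g : AffineGroup H V) (p : FamilyCoset L) (b : FamilyCoset M) :
    Incident (g • p) (g • b) ↔ Incident p b :=
  ⟨fun h => by simpa using h.smul g⁻¹, fun h => h.smul g⟩

/-- An incident pair is determined by a common element and two distinct indices. Translations move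
the former freely, and `H` the latter. -/
theorem exists_smul_eq_of_incident [hH : MulAction.IsMultiplyPretransitive H ι 2]
    {p q : FamilyCoset L} {b c : FamilyCoset M} (hpb : Incident p b) (hqc : Incident q c) :
    ∃ g : AffineGroup H V, g • p = q ∧ g • b = c := by
  obtain ⟨i, j, v, hij, rfl, rfl⟩ := hpb
  obtain ⟨i', j', w, hij', rfl, rfl⟩ := hqc
  obtain ⟨h, rfl, rfl⟩ := MulAction.is_two_pretransitive_iff.1 hH hij hij'
  obtain ⟨g, rfl, rfl⟩ := AffineGroup.exists_right_eq_and_smul_eq h v w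
  exact ⟨g, rfl, rfl⟩

instance [MulAction.IsPretransitive H ι] :
    MulAction.IsPretransitive (AffineGroup H V) (FamilyCoset L) where
  exists_smul_eq p q := by
    obtain ⟨i, v, rfl⟩ := exists_mk'_eq p
    obtain ⟨j, w, rfl⟩ := exists_mk'_eq q
    obtain ⟨h, rfl⟩ := MulAction.exists_smul_eq H i j
    obtain ⟨g, rfl, rfl⟩ := AffineGroup.exists_right_eq_and_smul_eq h v w
    exact ⟨g, rfl⟩

theorem faithfulSMul [FaithfulSMul H V] {i j : ι} (hL : Disjoint (L i) (L j)) :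
    FaithfulSMul (AffineGroup H V) (FamilyCoset L) where
  eq_of_smul_eq_smul {g g'} h := by
    have hmem (v : V) (k : ι) : g • v - g' • v ∈ L k := by
      have hk := (mk'_eq_mk'.1 (h (mk' L (g.right⁻¹ • k) v))).2
      change _ ∈ L (g.right • g.right⁻¹ • k) at hk
      rwa [smul_inv_smul] at hk
    exact eq_of_smul_eq_smul fun v =>
      sub_eq_zero.1 (AddSubgroup.disjoint_def.1 hL (hmem v i) (hmem v j))

end FamilyCoset

end FamilyCoset

section DoubleFamily

variable {V ι : Type*} [AddCommGroup V]

/-- `L` and `M` form a double family of order `q`: two families of `q + 2` subgroups of order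
`q ^ 2` of a group of order `q ^ 4` such that two members of the same family meet trivially and
members of different families with different indices meet in `q` elements. For a vector space over
the field of order `q` the members are two sets of `q + 2` pairwise skew lines of projective
3-space, each line of one set meeting all lines of the other except possibly its partner, as in
Schläfli's double six. -/
structure IsDoubleFamily (q : ℕ) (L M : ι → AddSubgroup V) : Prop where
  card_space : Nat.card V = q ^ 4
  card_index : Nat.card ι = q + 2
  card_left (i : ι) : Nat.card (L i) = q ^ 2
  card_right (i : ι) : Nat.card (M i) = q ^ 2
  disjoint_left : Pairwise (Function.onFun Disjoint L)
  disjoint_right : Pairwise (Function.onFun Disjoint M)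
  card_inf {i j : ι} (hij : i ≠ j) : Nat.card ↥(L i ⊓ M j) = q

namespace IsDoubleFamily

variable {q : ℕ} {L M : ι → AddSubgroup V}

theorem symm (h : IsDoubleFamily q L M) : IsDoubleFamily q M L where
  card_space := h.card_space
  card_index := h.card_index
  card_left := h.card_right
  card_right := h.card_left
  disjoint_left := h.disjoint_right
  disjoint_right := h.disjoint_left
  card_inf hij := by rw [inf_comm, h.card_inf hij.symm]

theorem finite_index (h : IsDoubleFamily q L M) : Finite ι :=
  Nat.finite_of_card_ne_zero (by simp [h.card_index])

open IsEquivariantFamily in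
theorem of_isEquivariantFamily (H : Type*) [Group H] [DistribMulAction H V]
    [MulAction H ι] [IsEquivariantFamily H L] [IsEquivariantFamily H M]
    [hH : MulAction.IsMultiplyPretransitive H ι 2] {q : ℕ} {i j : ι} (hij : i ≠ j)
    (hV : Nat.card V = q ^ 4) (hι : Nat.card ι = q + 2) (hL : Nat.card (L i) = q ^ 2)
    (hM : Nat.card (M i) = q ^ 2) (hLL : Disjoint (L i) (L j)) (hMM : Disjoint (M i) (M j))
    (hLM : Nat.card ↥(L i ⊓ M j) = q) : IsDoubleFamily q L M := by
  have htrans {i' j' : ι} (hij' : i' ≠ j') : ∃ h : H, h • i = i' ∧ h • j = j' :=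
    MulAction.is_two_pretransitive_iff.1 hH hij hij'
  have : MulAction.IsPretransitive H ι := MulAction.isPretransitive_of_is_two_pretransitive
  refine ⟨hV, hι, fun i' => ?_, fun i' => ?_, fun i' j' hij' => ?_, fun i' j' hij' => ?_,
    fun {i' j'} hij' => ?_⟩
  · obtain ⟨h, rfl⟩ := MulAction.exists_smul_eq H i i'
    rw [card_smul, hL]
  · obtain ⟨h, rfl⟩ := MulAction.exists_smul_eq H i i'
    rw [card_smul, hM]
  · obtain ⟨h, rfl, rfl⟩ := htrans hij'
    exact disjoint_smul h hLL
  · obtain ⟨h, rfl, rfl⟩ := htrans hij'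
    exact disjoint_smul h hMM
  · obtain ⟨h, rfl, rfl⟩ := htrans hij'
    rw [card_inf_smul, hLM]

variable [Finite V] {i i' j : ι}

theorem pos (h : IsDoubleFamily q L M) : 0 < q :=
  Nat.pos_of_ne_zero fun hq => Nat.card_pos.ne' (h.card_space.trans (by simp [hq]) : Nat.card V = 0)

theorem card_quotient (h : IsDoubleFamily q L M) (i : ι) : Nat.card (V ⧸ L i) = q ^ 2 := by
  refine Nat.eq_of_mul_eq_mul_right (pow_pos h.pos 2) ?_
  rw [← pow_add, ← h.card_space, AddSubgroup.card_eq_card_quotient_mul_card_addSubgroup (L i),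
    h.card_left]

theorem card_map_mk' (h : IsDoubleFamily q L M) (hij : i ≠ j) :
    Nat.card ((L i).map (QuotientAddGroup.mk' (M j))) = q := by
  refine Nat.eq_of_mul_eq_mul_left h.pos ?_
  rw [← sq, ← h.card_left i, ← card_inf_mul_card_map_mk' (L i) (M j), h.card_inf hij]

theorem sup_eq_top (h : IsDoubleFamily q L M) (hij : i ≠ j) : L i ⊔ L j = ⊤ := by
  have hcard : Nat.card (L i) * Nat.card (L j) = Nat.card V := by
    rw [h.card_left, h.card_left, ← pow_add, h.card_space]
  exact (disjoint_iff_sup_eq_top_of_card_mul_card hcard).1 (h.disjoint_left hij)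

theorem isCompl_map_mk' (h : IsDoubleFamily q L M) (hii' : i ≠ i') (hij : i ≠ j) (hij' : i' ≠ j) :
    IsCompl ((L i).map (QuotientAddGroup.mk' (M j))) ((L i').map (QuotientAddGroup.mk' (M j))) := by
  have hsup :
      (L i).map (QuotientAddGroup.mk' (M j)) ⊔ (L i').map (QuotientAddGroup.mk' (M j)) = ⊤ := by
    rw [← AddSubgroup.map_sup, h.sup_eq_top hii',
      AddSubgroup.map_top_of_surjective _ (QuotientAddGroup.mk'_surjective _)]
  refine ⟨(disjoint_iff_sup_eq_top_of_card_mul_card ?_).2 hsup, codisjoint_iff.2 hsup⟩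
  rw [h.card_map_mk' hij, h.card_map_mk' hij', h.symm.card_quotient, sq]

/-- The images of the `M j`, for `j ≠ i`, are `q + 1` disjoint subgroups of order `q` of the group
`V ⧸ L i` of order `q ^ 2`. -/
theorem existsUnique_mem_sup (h : IsDoubleFamily q L M) {v : V} (hv : v ∉ L i) :
    ∃! j, j ≠ i ∧ v ∈ M j ⊔ L i := by
  have hdisj {j k : ι} (hj : j ≠ i) (hk : k ≠ i) (hjk : j ≠ k) :=
    (h.symm.isCompl_map_mk' hjk hj hk).disjoint
  have hcard : Nat.card {j // j ≠ i} = q + 1 := by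
    have := h.finite_index
    rw [card_subtype_ne, h.card_index]
    omega
  simp only [← mk'_mem_map_mk'_iff]
  obtain ⟨⟨j, hj⟩, hvj⟩ := exists_mem_of_pairwise_disjoint (h.card_quotient i) hcard
    (fun j => h.symm.card_map_mk' j.2) (fun j k hjk => hdisj j.2 k.2 (Subtype.coe_ne_coe.2 hjk))
    (QuotientAddGroup.mk' (L i) v)
  refine ⟨j, ⟨hj, hvj⟩, fun k ⟨hk, hvk⟩ => ?_⟩
  by_contra hkj
  exact hv ((QuotientAddGroup.eq_zero_iff v).1
    (AddSubgroup.disjoint_def.1 (hdisj hk hj hkj) hvk hvj))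

open FamilyCoset

theorem card_familyCoset (h : IsDoubleFamily q L M) :
    Nat.card (FamilyCoset L) = (q + 2) * q ^ 2 := by
  have := h.finite_index
  have := Fintype.ofFinite ι
  simp [Nat.card_congr (equivSigma L), Nat.card_sigma, h.card_quotient, ← h.card_index]

theorem ncard_setOf_incident (h : IsDoubleFamily q L M) (p : FamilyCoset L) :
    {b : FamilyCoset M | Incident p b}.ncard = (q + 1) * q := by
  classical
  have := h.finite_index
  have := Fintype.ofFinite ι
  obtain ⟨i, v, rfl⟩ := exists_mk'_eq p
  have hmember (j : ι) : {c : V ⧸ M j | Incident (mk' L i v) (⟨j, c⟩ : FamilyCoset M)}.ncard =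
      if i ≠ j then q else 0 := by
    split_ifs with hij
    · simp only [incident_mk'_iff, hij, ne_eq, not_false_eq_true, true_and, ncard_setOf_sub_mem,
        h.card_map_mk' hij]
    · simp [incident_mk'_iff, hij]
  have hcard : (Finset.univ.filter (i ≠ ·)).card = q + 1 := by
    rw [Finset.filter_ne, Finset.card_erase_of_mem (Finset.mem_univ i), Finset.card_univ,
      ← Nat.card_eq_fintype_card, h.card_index]
    omega
  simp only [ncard_eq_sum, Set.mem_ofPred_eq, hmember, ← Finset.sum_filter, Finset.sum_const, hcard,
    smul_eq_mul]

theorem ncard_setOf_incident_and_incident_of_index_eq (h : IsDoubleFamily q L M) {i : ι} {v w : V}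
    (hvw : v - w ∉ L i) :
    {b : FamilyCoset M | Incident (mk' L i v) b ∧ Incident (mk' L i w) b}.ncard = q := by
  have := h.finite_index
  have := Fintype.ofFinite ι
  obtain ⟨j, ⟨hji, hj⟩, hunique⟩ := h.existsUnique_mem_sup hvw
  have hmem {k : ι} {c : V ⧸ M k} (hv : c - v ∈ (L i).map (QuotientAddGroup.mk' (M k))) :
      c - w ∈ (L i).map (QuotientAddGroup.mk' (M k)) ↔ v - w ∈ M k ⊔ L i := by
    rw [sup_comm, ← mk'_mem_map_mk'_iff, ← sub_add_sub_cancel c (v : V ⧸ M k) w,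
      AddSubgroup.add_mem_cancel_left _ hv]
    rfl
  rw [ncard_eq_sum, Fintype.sum_eq_single j]
  · have hset : {c : V ⧸ M j | (⟨j, c⟩ : FamilyCoset M) ∈
        {b : FamilyCoset M | Incident (mk' L i v) b ∧ Incident (mk' L i w) b}} =
        {c : V ⧸ M j | c - v ∈ (L i).map (QuotientAddGroup.mk' (M j))} := by
      ext c
      simp only [Set.mem_ofPred_eq, incident_mk'_iff]
      exact ⟨fun hc => hc.1.2, fun hc => ⟨⟨hji.symm, hc⟩, hji.symm, (hmem hc).2 hj⟩⟩
    rw [hset, ncard_setOf_sub_mem, h.card_map_mk' hji.symm]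
  · intro k hkj
    rw [Set.ncard_eq_zero, Set.eq_empty_iff_forall_notMem]
    rintro c ⟨hv, hw⟩
    obtain ⟨hik, hv⟩ := incident_mk'_iff.1 hv
    exact hkj (hunique k ⟨hik.symm, (hmem hv).1 (incident_mk'_iff.1 hw).2⟩)

theorem ncard_setOf_incident_and_incident_of_index_ne (h : IsDoubleFamily q L M) {i i' : ι}
    (hii' : i ≠ i') (v w : V) :
    {b : FamilyCoset M | Incident (mk' L i v) b ∧ Incident (mk' L i' w) b}.ncard = q := by
  classical
  have := h.finite_index
  have := Fintype.ofFinite ι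
  have hmember (j : ι) : {c : V ⧸ M j | Incident (mk' L i v) (⟨j, c⟩ : FamilyCoset M) ∧
      Incident (mk' L i' w) (⟨j, c⟩ : FamilyCoset M)}.ncard =
      if j ∈ ({i, i'} : Finset ι)ᶜ then 1 else 0 := by
    simp only [incident_mk'_iff, Finset.mem_compl, Finset.mem_insert, Finset.mem_singleton, not_or,
      eq_comm (a := j), ← ne_eq]
    split_ifs with hj
    · simp only [hj.1, hj.2, ne_eq, not_false_eq_true, true_and]
      exact ncard_setOf_sub_mem_and_sub_mem_of_isCompl (h.isCompl_map_mk' hii' hj.1 hj.2) v w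
    · rw [Set.ncard_eq_zero, Set.eq_empty_iff_forall_notMem]
      rintro c ⟨hv, hw⟩
      exact hj ⟨hv.1, hw.1⟩
  have hcard : (({i, i'} : Finset ι)ᶜ).card = q := by
    rw [Finset.card_compl, Finset.card_pair hii', ← Nat.card_eq_fintype_card, h.card_index,
      Nat.add_sub_cancel_right]
  simp only [ncard_eq_sum, Set.mem_ofPred_eq, hmember, Finset.sum_ite_mem, Finset.univ_inter,
    Finset.sum_const, hcard, smul_eq_mul, mul_one]

theorem ncard_setOf_incident_and_incident (h : IsDoubleFamily q L M) {p p' : FamilyCoset L}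
    (hpp' : p ≠ p') : {b : FamilyCoset M | Incident p b ∧ Incident p' b}.ncard = q := by
  obtain ⟨i, v, rfl⟩ := exists_mk'_eq p
  obtain ⟨i', w, rfl⟩ := exists_mk'_eq p'
  obtain rfl | hii' := eq_or_ne i i'
  · exact h.ncard_setOf_incident_and_incident_of_index_eq fun hvw =>
      hpp' (mk'_eq_mk'.2 ⟨rfl, hvw⟩)
  · exact h.ncard_setOf_incident_and_incident_of_index_ne hii' v w

/-- By duality distinct blocks meet in `q` points, fewer than a block has. -/
theorem eq_of_forall_incident_iff (h : IsDoubleFamily q L M) {b c : FamilyCoset M}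
    (hbc : ∀ p : FamilyCoset L, Incident p b ↔ Incident p c) : b = c := by
  by_contra hne
  have hpair := h.symm.ncard_setOf_incident_and_incident hne
  simp only [incident_comm (p := b), incident_comm (p := c), hbc, and_self] at hpair
  simp only [← incident_comm (p := c), h.symm.ncard_setOf_incident] at hpair
  nlinarith [h.pos]

end IsDoubleFamily

end DoubleFamily

section DesignOfDoubleFamily

open FamilyCoset

variable {V ι : Type*} [AddCommGroup V] [Finite V] {q : ℕ}
  {L M : ι → AddSubgroup V} {P : Type} [Fintype P] [DecidableEq P]

namespace IsDoubleFamily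

/-- The symmetric design with the cosets of the `L i`, labelled by `P`, as points and the cosets of
the `M j` as blocks. -/
noncomputable def design (h : IsDoubleFamily q L M) (e : P ≃ FamilyCoset L) :
    SymmetricDesign P ((q + 2) * q ^ 2) ((q + 1) * q) q :=
  haveI := h.finite_index
  .ofIncidence (fun x (b : FamilyCoset M) => Incident (e x) b)
    (fun b c hbc => h.eq_of_forall_incident_iff fun p => by
      obtain ⟨x, rfl⟩ := e.surjective p
      simpa [SymmetricDesign.mem_blockOf] using Finset.ext_iff.1 hbc x)
    ((Nat.card_congr e).trans h.card_familyCoset)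
    h.symm.card_familyCoset
    (fun b => by
      rw [← h.symm.ncard_setOf_incident b, ncard_setOf_apply_equiv e (Incident · b)]
      simp only [incident_comm (p := b)])
    (fun x => h.ncard_setOf_incident (e x))
    (fun _ _ hxy => h.ncard_setOf_incident_and_incident (e.injective.ne hxy))

theorem card_of_mem_fiberPartition_index [Fintype ι] [DecidableEq ι] (h : IsDoubleFamily q L M)
    (e : P ≃ FamilyCoset L) {s : Finset P} (hs : s ∈ fiberPartition fun x => (e x).index) :
    s.card = q ^ 2 := by
  obtain ⟨i, rfl⟩ := mem_fiberPartition.1 hs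
  rw [← Set.ncard_coe_finset, Finset.coe_filter_univ, ncard_setOf_apply_equiv e (·.index = i),
    ncard_setOf_index_eq, h.card_quotient]

variable {H : Type*} [Group H] [DistribMulAction H V] [MulAction H ι]
  [IsEquivariantFamily H L] [IsEquivariantFamily H M] [MulAction (AffineGroup H V) P]

theorem isAutGroup_design (h : IsDoubleFamily q L M) {e : P ≃ FamilyCoset L}
    (he : ∀ (g : AffineGroup H V) x, e (g • x) = g • e x) :
    IsAutGroup (h.design e) (MulAction.toPermHom (AffineGroup H V) P).range :=
  have := h.finite_index
  SymmetricDesign.isAutGroup_ofIncidence fun g x b => by rw [he, incident_smul_smul]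

theorem flagTransitive_design [MulAction.IsMultiplyPretransitive H ι 2]
    (h : IsDoubleFamily q L M) {e : P ≃ FamilyCoset L}
    (he : ∀ (g : AffineGroup H V) x, e (g • x) = g • e x) :
    FlagTransitive (h.design e) (MulAction.toPermHom (AffineGroup H V) P).range := by
  have := h.finite_index
  refine SymmetricDesign.flagTransitive_ofIncidence
    (fun g x b => by rw [he, incident_smul_smul]) fun x y b c hx hy => ?_
  obtain ⟨g, hgx, hgb⟩ := exists_smul_eq_of_incident (H := H) hx hy
  exact ⟨g, e.injective ((he g x).trans hgx), hgb⟩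

end IsDoubleFamily

theorem exists_flagTransitive_imprimitive_of_isDoubleFamily {H : Type*} [Group H]
    [DistribMulAction H V] [FaithfulSMul H V] [MulAction H ι]
    [MulAction.IsMultiplyPretransitive H ι 2] [IsEquivariantFamily H L] [IsEquivariantFamily H M]
    (h : IsDoubleFamily q L M) (hP : Nat.card P = (q + 2) * q ^ 2) :
    ∃ (D : SymmetricDesign P ((q + 2) * q ^ 2) ((q + 1) * q) q) (G : Subgroup (Equiv.Perm P)),
      IsAutGroup D G ∧ Nat.card G = Nat.card V * Nat.card H ∧ FlagTransitive D G ∧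
      (∀ x y : P, ∃ g ∈ G, g x = y) ∧
      ∃ C : Finset (Finset P), C.card = q + 2 ∧ (∀ Δ ∈ C, Δ.card = q ^ 2) ∧
        (∀ x, ∃! Δ, Δ ∈ C ∧ x ∈ Δ) ∧ ∀ g ∈ G, ∀ Δ ∈ C, Δ.image g ∈ C := by
  classical
  have := h.finite_index
  have := Fintype.ofFinite ι
  obtain ⟨e⟩ : Nonempty (P ≃ FamilyCoset L) :=
    Finite.card_eq.1 (hP.trans h.card_familyCoset.symm)
  let : MulAction (AffineGroup H V) P := e.mulAction _
  have he (g : AffineGroup H V) (x : P) : e (g • x) = g • e x := e.apply_symm_apply _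
  have : MulAction.IsPretransitive H ι := MulAction.isPretransitive_of_is_two_pretransitive
  have : MulAction.IsPretransitive (AffineGroup H V) P := isPretransitive_of_equiv e he
  obtain ⟨i, j, hij⟩ : ∃ i j : ι, i ≠ j := by
    rw [← Fintype.one_lt_card_iff, ← Nat.card_eq_fintype_card, h.card_index]
    omega
  have : FaithfulSMul (AffineGroup H V) (FamilyCoset L) := faithfulSMul (h.disjoint_left hij)
  have : FaithfulSMul (AffineGroup H V) P := faithfulSMul_of_equiv e he
  have hindex : Function.Surjective fun x => (e x).index := fun i =>
    ⟨e.symm (mk' L i 0), by simp [mk']⟩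
  refine ⟨h.design e, (MulAction.toPermHom (AffineGroup H V) P).range, h.isAutGroup_design he, ?_,
    h.flagTransitive_design he, exists_mem_range_toPermHom_apply_eq,
    fiberPartition fun x => (e x).index, ?_, fun _ => h.card_of_mem_fiberPartition_index e,
    existsUnique_mem_fiberPartition, ?_⟩
  · rw [natCard_range_toPermHom, SemidirectProduct.card]
    rfl
  · rw [card_fiberPartition hindex, ← Nat.card_eq_fintype_card, h.card_index]
  · rintro _ ⟨g, rfl⟩ s hs
    exact image_mem_fiberPartition (τ := MulAction.toPerm g.right)
      (fun x => congrArg index (he g x)) hs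

end DesignOfDoubleFamily

namespace DoubleFive

/-- The field of order 81 as a vector space over its prime field, in coordinates for which both `τ`
and the two planes `coordinatePlane 0 1` and `coordinatePlane 2 3` are in block form. -/
abbrev Space := Fin 4 → ZMod 3

/-- Multiplication by a root of unity `ζ` of order 5 in the field of order 81. -/
def ω : Matrix (Fin 4) (Fin 4) (ZMod 3) :=
  !![0, 0, 1, 0; 1, 1, 0, 1; 0, 1, 1, 0; -1, 0, 1, 0]

/-- The semilinear map `x ↦ a * x ^ 27` of the field of order 81, for a non-square `a`. As
`ζ ^ 27 = ζ ^ 2` for the root of unity `ζ` of order 5, it conjugates `ω` to `ω ^ 2`; its fourth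
power is `-1`, the multiplication by the norm of `a`. -/
def τ : Matrix (Fin 4) (Fin 4) (ZMod 3) :=
  !![0, 1, 0, 0; 1, 1, 0, 0; 0, 0, 0, 1; 0, 0, 1, -1]

theorem ω_pow_five : ω ^ 5 = 1 := by decide +kernel

theorem τ_pow_eight : τ ^ 8 = 1 := by decide +kernel

theorem τ_mul_ω : τ * ω = ω ^ 2 * τ := by decide +kernel

/-- The cyclic group generated by `τ`, which stabilizes the index `0`. -/
abbrev StabilizerGroup := Multiplicative (ZMod 8)

instance : DistribMulAction StabilizerGroup (ZMod 5) :=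
  DistribMulAction.compHom (ZMod 5) (zmodPowersHom 2 (by decide) : StabilizerGroup →* ZMod 5)

/-- The group of order 40 generated by `ω` and `τ`, as an extension of the group of the affine maps
`i ↦ t + 2 ^ k * i` of the index set `ZMod 5` by `τ ^ 4 = -1`. -/
abbrev SymmetryGroup := AffineGroup StabilizerGroup (ZMod 5)

instance : MulAction.IsMultiplyPretransitive SymmetryGroup (ZMod 5) 2 :=
  AffineGroup.isMultiplyPretransitive_two (by decide)

/-- The linear representation of the symmetry group by the matrices `ω ^ t * τ ^ k`. -/
def rep : SymmetryGroup →* Matrix (Fin 4) (Fin 4) (ZMod 3) where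
  toFun h := zmodPowersHom ω ω_pow_five h.left * zmodPowersHom τ τ_pow_eight h.right
  map_one' := by simp
  map_mul' g h := by
    rw [SemidirectProduct.mul_left, SemidirectProduct.mul_right, map_mul, map_mul, mul_assoc,
      mul_assoc]
    congr 1
    rw [← mul_assoc, ← mul_assoc]
    congr 1
    exact (pow_mul_zmodPowersHom ω_pow_five τ_mul_ω g.right.toAdd.val h.left.toAdd).symm

instance : DistribMulAction SymmetryGroup Space :=
  DistribMulAction.compHom Space (MonoidHom.comp (Matrix.toLinAlgEquiv' : _ ≃ₐ[ZMod 3]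
    Module.End (ZMod 3) Space).toMulEquiv.toMonoidHom rep)

theorem rep_injective : Function.Injective rep := by
  have hker (t : ZMod 5) (k : ZMod 8) (h : rep ⟨.ofAdd t, .ofAdd k⟩ = 1) : t = 0 ∧ k = 0 := by
    revert t k
    decide +kernel
  refine (injective_iff_map_eq_one rep).2 fun h hh => ?_
  obtain ⟨hleft, hright⟩ := hker h.left.toAdd h.right.toAdd hh
  exact SemidirectProduct.ext hleft hright

instance : FaithfulSMul SymmetryGroup Space where
  eq_of_smul_eq_smul h := rep_injective (Matrix.toLinAlgEquiv'.injective (LinearMap.ext h))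

/-- The plane of `Space` given by the vanishing of the coordinates `a` and `b`. -/
def coordinatePlane (a b : Fin 4) : AddSubgroup Space where
  carrier := {v | v a = 0 ∧ v b = 0}
  zero_mem' := ⟨rfl, rfl⟩
  add_mem' hv hw := ⟨by simp [hv.1, hw.1], by simp [hv.2, hw.2]⟩
  neg_mem' hv := ⟨by simp [hv.1], by simp [hv.2]⟩

instance (a b : Fin 4) (v : Space) : Decidable (v ∈ coordinatePlane a b) :=
  inferInstanceAs (Decidable (v a = 0 ∧ v b = 0))

instance (a b : Fin 4) (i : ZMod 5) (v : Space) :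
    Decidable (v ∈ orbitFamily (K := StabilizerGroup) (coordinatePlane a b) i) :=
  inferInstanceAs (Decidable (_ ∈ coordinatePlane a b))

/-- The planes whose cosets are the points of the design. -/
def pointPlane : ZMod 5 → AddSubgroup Space :=
  orbitFamily (K := StabilizerGroup) (coordinatePlane 0 1)

/-- The planes whose cosets are the blocks of the design. -/
def blockPlane : ZMod 5 → AddSubgroup Space :=
  orbitFamily (K := StabilizerGroup) (coordinatePlane 2 3)

instance : IsEquivariantFamily SymmetryGroup pointPlane :=
  isEquivariantFamily_orbitFamily (by decide +kernel)

instance : IsEquivariantFamily SymmetryGroup blockPlane :=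
  isEquivariantFamily_orbitFamily (by decide +kernel)

instance (i : ZMod 5) (v : Space) : Decidable (v ∈ pointPlane i) :=
  inferInstanceAs (Decidable (v ∈ orbitFamily (K := StabilizerGroup) (coordinatePlane 0 1) i))

instance (i : ZMod 5) (v : Space) : Decidable (v ∈ blockPlane i) :=
  inferInstanceAs (Decidable (v ∈ orbitFamily (K := StabilizerGroup) (coordinatePlane 2 3) i))

instance (i j : ZMod 5) (v : Space) : Decidable (v ∈ pointPlane i ⊓ blockPlane j) :=
  inferInstanceAs (Decidable (v ∈ pointPlane i ∧ v ∈ blockPlane j))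

theorem isDoubleFamily : IsDoubleFamily 3 pointPlane blockPlane := by
  have hpoint : Nat.card (pointPlane 0) = 3 ^ 2 := by
    rw [Nat.card_eq_fintype_card]
    decide +kernel
  have hblock : Nat.card (blockPlane 0) = 3 ^ 2 := by
    rw [Nat.card_eq_fintype_card]
    decide +kernel
  have hpoint_disjoint : Disjoint (pointPlane 0) (pointPlane 1) := by
    rw [AddSubgroup.disjoint_def]
    decide +kernel
  have hblock_disjoint : Disjoint (blockPlane 0) (blockPlane 1) := by
    rw [AddSubgroup.disjoint_def]
    decide +kernel
  have hinf : Nat.card ↥(pointPlane 0 ⊓ blockPlane 1) = 3 := by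
    rw [Nat.card_eq_fintype_card]
    decide +kernel
  exact .of_isEquivariantFamily SymmetryGroup (by decide) (by simp) (by simp) hpoint hblock
    hpoint_disjoint hblock_disjoint hinf

end DoubleFive

/-- Example 2.4 of the paper: there exists a nontrivial symmetric `(45,12,3)` design
together with a group `G` of automorphisms of order `3240` which is flag-transitive and
point-imprimitive: `G` is transitive on points and flags and leaves invariant a
nontrivial partition of the 45 points into 5 classes of size 9. -/
theorem exists_flagTransitive_imprimitive_45_12_3 :
    ∃ (D : SymmetricDesign (Fin 45) 45 12 3) (G : Subgroup (Equiv.Perm (Fin 45))),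
      IsAutGroup D G ∧
      Nat.card G = 3240 ∧
      FlagTransitive D G ∧
      (∀ p q : Fin 45, ∃ g ∈ G, g p = q) ∧
      ∃ C : Finset (Finset (Fin 45)),
        C.card = 5 ∧
        (∀ Δ ∈ C, Δ.card = 9) ∧
        (∀ p : Fin 45, ∃! Δ : Finset (Fin 45), Δ ∈ C ∧ p ∈ Δ) ∧
        (∀ g ∈ G, ∀ Δ ∈ C, Δ.image (g : Fin 45 → Fin 45) ∈ C) := by
  have hV : Nat.card DoubleFive.Space = 81 := by simp
  have hH : Nat.card DoubleFive.SymmetryGroup = 40 := by simp [SemidirectProduct.card]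
  obtain ⟨D, G, hD, hG, h⟩ := exists_flagTransitive_imprimitive_of_isDoubleFamily
    (H := DoubleFive.SymmetryGroup) (P := Fin 45) DoubleFive.isDoubleFamily (by simp)
  exact ⟨D, G, hD, by rw [hG, hV, hH], h⟩
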